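/- arXiv:2007.07826 — 3 statements merged into one kernel-verified Lean document; each statement's English description precedes it below -/
import Mathlib

section
/- Let (H, N₁, N₂) be a bigraded Hodge–Lefschetz structure. For every pair of integers a, b ≥ 0 there is a direct sum decomposition H_{a,b} = ⨁_{r,s ≥ 0} N₁^r N₂^s (P_{a+2r, b+2s}), where each map N₁^r N₂^s is injective on P_{a+2r, b+2s}. -/
namespace HLS

variable {H : Type} [AddCommGroup H] [Module ℝ H]

/-- The primitive part `P_{a,b} = H_{a,b} ∩ ker(N₁^{a+1}) ∩ ker(N₂^{b+1})`, for `a, b ≥ 0`. -/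
def prim (Hgr : ℤ → ℤ → Submodule ℝ H) (N₁ N₂ : H →ₗ[ℝ] H) (a b : ℕ) : Submodule ℝ H :=
  Hgr (a : ℤ) (b : ℤ) ⊓ LinearMap.ker (N₁ ^ (a + 1)) ⊓ LinearMap.ker (N₂ ^ (b + 1))

/-- A bigraded Hodge–Lefschetz structure: a finite-dimensional real vector space `H`,
a direct sum decomposition `H = ⨁_{(a,b)} H_{a,b}`, and commuting operators `N₁, N₂` of
bidegrees `(-2,0)` and `(0,-2)` with `N₁^a : H_{a,b} → H_{-a,b}` and
`N₂^b : H_{a,b} → H_{a,-b}` isomorphisms for `a ≥ 0`, resp. `b ≥ 0`. -/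
structure IsHL (Hgr : ℤ → ℤ → Submodule ℝ H) (N₁ N₂ : H →ₗ[ℝ] H) : Prop where
  findim : FiniteDimensional ℝ H
  internal : DirectSum.IsInternal (fun p : ℤ × ℤ => Hgr p.1 p.2)
  mapN₁ : ∀ a b : ℤ, ∀ x ∈ Hgr a b, N₁ x ∈ Hgr (a - 2) b
  mapN₂ : ∀ a b : ℤ, ∀ x ∈ Hgr a b, N₂ x ∈ Hgr a (b - 2)
  comm : N₁ ∘ₗ N₂ = N₂ ∘ₗ N₁
  bijN₁ : ∀ (a : ℕ) (b : ℤ),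
    Submodule.map (N₁ ^ a) (Hgr (a : ℤ) b) = Hgr (-(a : ℤ)) b ∧
    ∀ x ∈ Hgr (a : ℤ) b, (N₁ ^ a) x = 0 → x = 0
  bijN₂ : ∀ (a : ℤ) (b : ℕ),
    Submodule.map (N₂ ^ b) (Hgr a (b : ℤ)) = Hgr a (-(b : ℤ)) ∧
    ∀ x ∈ Hgr a (b : ℤ), (N₂ ^ b) x = 0 → x = 0

/-- A polarization on a bigraded Hodge–Lefschetz structure. -/
structure IsPolarization (Hgr : ℤ → ℤ → Submodule ℝ H) (N₁ N₂ : H →ₗ[ℝ] H)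
    (ψ : H →ₗ[ℝ] H →ₗ[ℝ] ℝ) : Prop where
  orth : ∀ a b a' b' : ℤ, ¬ (a + a' = 0 ∧ b + b' = 0) →
    ∀ x ∈ Hgr a b, ∀ y ∈ Hgr a' b', ψ x y = 0
  primSymm : ∀ a b : ℕ, ∀ x ∈ prim Hgr N₁ N₂ a b, ∀ y ∈ prim Hgr N₁ N₂ a b,
    ψ x (((N₁ ^ a) ∘ₗ (N₂ ^ b)) y) = ψ y (((N₁ ^ a) ∘ₗ (N₂ ^ b)) x)
  primPosDef : ∀ a b : ℕ, ∀ x ∈ prim Hgr N₁ N₂ a b, x ≠ 0 →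
    0 < ψ x (((N₁ ^ a) ∘ₗ (N₂ ^ b)) x)
  skew₁ : ∀ x y : H, ψ (N₁ x) y + ψ x (N₁ y) = 0
  skew₂ : ∀ x y : H, ψ (N₂ x) y + ψ x (N₂ y) = 0

/-- The defining property of the operator `w`:
`w(N₁^r N₂^s x) = (-1)^{r+s} (r!/(a-r)!)(s!/(b-s)!) N₁^{a-r} N₂^{b-s} x` for `x ∈ P_{a,b}`,
`r ≤ a`, `s ≤ b`, and `w(N₁^r N₂^s x) = 0` otherwise.  (By the primitive decomposition this
determines `w` uniquely.) -/
def IsW (Hgr : ℤ → ℤ → Submodule ℝ H) (N₁ N₂ : H →ₗ[ℝ] H) (w : H →ₗ[ℝ] H) : Prop :=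
  ∀ a b r s : ℕ, ∀ x ∈ prim Hgr N₁ N₂ a b,
    w (((N₁ ^ r) ∘ₗ (N₂ ^ s)) x) =
      if r ≤ a ∧ s ≤ b then
        ((-1 : ℝ) ^ (r + s) * ((r.factorial : ℝ) / ((a - r).factorial : ℝ)) *
          ((s.factorial : ℝ) / ((b - s).factorial : ℝ))) •
          (((N₁ ^ (a - r)) ∘ₗ (N₂ ^ (b - s))) x)
      else 0

/-- A differential on a polarized bigraded Hodge–Lefschetz structure. -/
structure IsDifferential (Hgr : ℤ → ℤ → Submodule ℝ H) (N₁ N₂ : H →ₗ[ℝ] H)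
    (ψ : H →ₗ[ℝ] H →ₗ[ℝ] ℝ) (dd : H →ₗ[ℝ] H) : Prop where
  mem : ∀ a b : ℤ, ∀ x ∈ Hgr a b, dd x ∈ Hgr (a - 1) (b - 1)
  sq : ∀ x, dd (dd x) = 0
  commN₁ : dd ∘ₗ N₁ = N₁ ∘ₗ dd
  commN₂ : dd ∘ₗ N₂ = N₂ ∘ₗ dd
  skew : ∀ x y : H, ψ (dd x) y + ψ x (dd y) = 0

/-- The codifferential `d* = - w⁻¹ ∘ d ∘ w`. -/
def dstar (w winv dd : H →ₗ[ℝ] H) : H →ₗ[ℝ] H := -(winv ∘ₗ dd ∘ₗ w)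

/-- The Laplacian `Δ = d d* + d* d`. -/
def lap (w winv dd : H →ₗ[ℝ] H) : H →ₗ[ℝ] H :=
  dd ∘ₗ dstar w winv dd + dstar w winv dd ∘ₗ dd

end HLS

namespace HLS

/-- A singly graded Lefschetz family: `N` has degree `-2` and `N^a : K a → K (-a)` is
bijective for `a ≥ 0`; `K` vanishes in large degrees. -/
structure IsL {H : Type} [AddCommGroup H] [Module ℝ H]
    (K : ℤ → Submodule ℝ H) (N : H →ₗ[ℝ] H) : Prop where
  map : ∀ a : ℤ, ∀ x ∈ K a, N x ∈ K (a - 2)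
  surj : ∀ (a : ℕ), ∀ y ∈ K (-(a : ℤ)), ∃ x ∈ K (a : ℤ), (N ^ a) x = y
  inj : ∀ (a : ℕ), ∀ x ∈ K (a : ℤ), (N ^ a) x = 0 → x = 0
  bdd : ∃ M : ℕ, ∀ a : ℤ, (M : ℤ) ≤ a → K a = ⊥

/-- single primitive part -/
def P1 {H : Type} [AddCommGroup H] [Module ℝ H]
    (K : ℤ → Submodule ℝ H) (N : H →ₗ[ℝ] H) (a : ℕ) : Submodule ℝ H :=
  K (a : ℤ) ⊓ LinearMap.ker (N ^ (a + 1))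

section
variable {H : Type} [AddCommGroup H] [Module ℝ H] {K : ℤ → Submodule ℝ H} {N : H →ₗ[ℝ] H}

lemma pow_mem (h : ∀ a : ℤ, ∀ x ∈ K a, N x ∈ K (a - 2)) (r : ℕ) :
    ∀ (a : ℤ), ∀ x ∈ K a, (N ^ r) x ∈ K (a - 2 * r) := by
  induction r with
  | zero => intro a x hx; simpa using hx
  | succ r ih =>
    intro a x hx
    have h1 := h _ _ (ih a x hx)
    rw [pow_succ', Module.End.mul_apply]
    convert h1 using 2
    push_cast; ring

lemma pow_zero_of_le {x : H} {r s : ℕ} (hrs : r ≤ s) (hx : (N ^ r) x = 0) : (N ^ s) x = 0 := by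
  obtain ⟨k, rfl⟩ := Nat.exists_eq_add_of_le' hrs
  rw [pow_add, Module.End.mul_apply, hx, map_zero]

lemma IsL.inj_le (h : IsL K N) {r a : ℕ} (hr : r ≤ a) {x : H} (hx : x ∈ K (a : ℤ))
    (h0 : (N ^ r) x = 0) : x = 0 :=
  h.inj a x hx (pow_zero_of_le hr h0)

lemma IsL.span (h : IsL K N) (a : ℕ) :
    K (a : ℤ) ≤ ⨆ r : ℕ, Submodule.map (N ^ r) (P1 K N (a + 2 * r)) := by
  obtain ⟨M, hM⟩ := h.bdd
  suffices H : ∀ n : ℕ, ∀ a : ℕ, M ≤ a + n →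
      K (a : ℤ) ≤ ⨆ r : ℕ, Submodule.map (N ^ r) (P1 K N (a + 2 * r)) from
    H M a (by omega)
  intro n
  induction n with
  | zero =>
    intro a ha
    rw [hM a (by omega)]; exact bot_le
  | succ n ih =>
    intro a ha x hx
    have h1 : (N ^ (a + 1)) x ∈ K (-((a + 2 : ℕ) : ℤ)) := by
      have := pow_mem h.map (a + 1) _ _ hx
      convert this using 2
      push_cast; ring
    obtain ⟨y, hy, hyx⟩ := h.surj _ _ h1
    have hNy : N y ∈ K (a : ℤ) := by
      have := h.map _ _ hy
      convert this using 2
      push_cast; ring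
    have hz : x - N y ∈ P1 K N a := by
      refine ⟨sub_mem hx hNy, ?_⟩
      change (N ^ (a + 1)) (x - N y) = 0
      rw [map_sub, ← hyx, ← Module.End.mul_apply, ← pow_succ, sub_self]
    have h2 := ih (a + 2) (by omega) hy
    have h3 : N y ∈ ⨆ r : ℕ, Submodule.map (N ^ r) (P1 K N (a + 2 * r)) := by
      have h4 := Submodule.mem_map_of_mem (f := N) h2
      rw [Submodule.map_iSup] at h4
      refine SetLike.le_def.1 (iSup_le fun r => ?_) h4
      refine le_trans ?_ (le_iSup _ (r + 1))
      rw [← Submodule.map_comp, pow_succ']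
      rw [show a + 2 + 2 * r = a + 2 * (r + 1) by ring]
      exact le_rfl
    have h5 : x - N y ∈ ⨆ r : ℕ, Submodule.map (N ^ r) (P1 K N (a + 2 * r)) := by
      refine Submodule.mem_iSup_of_mem 0 ⟨x - N y, by simpa using hz, by simp⟩
    simpa using add_mem h5 h3

lemma IsL.sum_mem (h : IsL K N) (n a : ℕ) (x : ℕ → H)
    (hx : ∀ r, x r ∈ K ((a + 2 * r : ℕ) : ℤ)) :
    ∑ r ∈ Finset.range n, (N ^ r) (x r) ∈ K (a : ℤ) := by
  refine Submodule.sum_mem _ fun r _ => ?_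
  have := pow_mem h.map r _ _ (hx r)
  convert this using 2
  push_cast; ring

lemma IsL.indep (h : IsL K N) (n : ℕ) : ∀ (a : ℕ) (x : ℕ → H),
    (∀ r, x r ∈ P1 K N (a + 2 * r)) → ∑ r ∈ Finset.range n, (N ^ r) (x r) = 0 →
    ∀ r < n, x r = 0 := by
  induction n with
  | zero => intro a x _ _ r hr; omega
  | succ n ih =>
    intro a x hx h0
    rw [Finset.sum_range_succ'] at h0
    have hx' : ∀ r, x (r + 1) ∈ P1 K N (a + 2 + 2 * r) := fun r => by
      rw [show a + 2 + 2 * r = a + 2 * (r + 1) by ring]; exact hx (r + 1)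
    set y := ∑ r ∈ Finset.range n, (N ^ r) (x (r + 1)) with hy
    have hyK : y ∈ K ((a + 2 : ℕ) : ℤ) :=
      h.sum_mem n (a + 2) (fun r => x (r + 1)) fun r => (hx' r).1
    have hNy : N y + x 0 = 0 := by
      rw [← h0, hy, map_sum]
      simp [pow_succ']
    have hx0 : (N ^ (a + 1)) (x 0) = 0 := by simpa using (hx 0).2
    have hy0 : y = 0 := by
      refine h.inj _ _ hyK ?_
      have : (N ^ (a + 1)) (N y + x 0) = 0 := by rw [hNy, map_zero]
      rwa [map_add, hx0, add_zero, ← Module.End.mul_apply, ← pow_succ] at this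
    intro r hr
    cases r with
    | zero => simpa [hy0] using hNy
    | succ r => exact ih (a + 2) (fun r => x (r + 1)) hx' hy0 r (by omega)

end

section
variable {H : Type} [AddCommGroup H] [Module ℝ H] {Hgr : ℤ → ℤ → Submodule ℝ H}
  {N₁ N₂ : H →ₗ[ℝ] H}

lemma IsHL.bdd (h : IsHL Hgr N₁ N₂) :
    ∃ M : ℕ, ∀ a b : ℤ, (M : ℤ) ≤ a ∨ (M : ℤ) ≤ b → Hgr a b = ⊥ := by
  have := h.findim
  have hf := WellFoundedGT.finite_ne_bot_of_iSupIndep h.internal.submodule_iSupIndep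
  obtain ⟨B, hB⟩ := (hf.image fun p : ℤ × ℤ => max p.1 p.2).bddAbove
  refine ⟨(B + 1).toNat, fun a b hab => ?_⟩
  by_contra hne
  have := hB ⟨(a, b), hne, rfl⟩
  simp only at this
  omega

lemma IsHL.comm_pow (h : IsHL Hgr N₁ N₂) (r s : ℕ) (x : H) :
    (N₁ ^ r) ((N₂ ^ s) x) = (N₂ ^ s) ((N₁ ^ r) x) := by
  have : Commute N₁ N₂ := h.comm
  exact LinearMap.congr_fun (this.pow_pow r s).eq x

lemma IsHL.isL₁ (h : IsHL Hgr N₁ N₂) (b : ℤ) : IsL (fun a => Hgr a b) N₁ where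
  map a x hx := h.mapN₁ a b x hx
  surj a y hy := by
    have := (h.bijN₁ a b).1
    change y ∈ Hgr (-(a : ℤ)) b at hy
    rw [← this] at hy
    exact hy
  inj a := (h.bijN₁ a b).2
  bdd := by
    obtain ⟨M, hM⟩ := h.bdd
    exact ⟨M, fun a ha => hM a b (Or.inl ha)⟩

lemma IsHL.inj₂ (h : IsHL Hgr N₁ N₂) (a : ℤ) {s b : ℕ} (hs : s ≤ b) {x : H}
    (hx : x ∈ Hgr a (b : ℤ)) (h0 : (N₂ ^ s) x = 0) : x = 0 :=
  (h.bijN₂ a b).2 x hx (pow_zero_of_le hs h0)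

lemma IsHL.isL₂ (h : IsHL Hgr N₁ N₂) (a : ℕ) :
    IsL (fun b => P1 (fun a => Hgr a b) N₁ a) N₂ where
  map b x hx := by
    refine ⟨h.mapN₂ a b x hx.1, ?_⟩
    have h1 := h.comm_pow (a + 1) 1 x
    have h2 : (N₁ ^ (a + 1)) x = 0 := hx.2
    rw [h2, map_zero, pow_one] at h1
    exact h1
  surj b y hy := by
    have h1 : y ∈ Hgr a (-(b : ℤ)) := hy.1
    have h2 : (N₁ ^ (a + 1)) y = 0 := hy.2
    rw [← (h.bijN₂ a b).1] at h1
    obtain ⟨x, hx, rfl⟩ := h1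
    refine ⟨x, ⟨hx, ?_⟩, rfl⟩
    rw [h.comm_pow] at h2
    exact (h.bijN₂ _ b).2 _ (pow_mem (h.isL₁ b).map (a + 1) _ _ hx) h2
  inj b x hx := (h.bijN₂ a b).2 x hx.1
  bdd := by
    obtain ⟨M, hM⟩ := h.bdd
    refine ⟨M, fun b hb => ?_⟩
    simp [P1, hM a b (Or.inr hb)]

lemma prim_eq (a b : ℕ) :
    P1 (fun b => P1 (fun a => Hgr a b) N₁ a) N₂ b = prim Hgr N₁ N₂ a b := rfl

lemma IsHL.indep (h : IsHL Hgr N₁ N₂) (a b n : ℕ) (x : ℕ → ℕ → H)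
    (hx : ∀ r s, x r s ∈ prim Hgr N₁ N₂ (a + 2 * r) (b + 2 * s))
    (h0 : ∑ r ∈ Finset.range n, ∑ s ∈ Finset.range n, (N₁ ^ r) ((N₂ ^ s) (x r s)) = 0)
    (r s : ℕ) (hr : r < n) (hs : s < n) : x r s = 0 := by
  have h1 := (h.isL₁ b).indep n a (fun r => ∑ s ∈ Finset.range n, (N₂ ^ s) (x r s))
    (fun r => (h.isL₂ (a + 2 * r)).sum_mem n b (x r) fun s => (hx r s).1)
    (by simpa [map_sum] using h0) r hr
  exact (h.isL₂ (a + 2 * r)).indep n b (x r) (hx r) h1 s hs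

end

end HLS

open HLS in
/-- for a bigraded Hodge–Lefschetz structure `(H, N₁, N₂)` and every pair of
integers `a, b ≥ 0`, there is a direct sum decomposition
`H_{a,b} = ⨁_{r,s ≥ 0} N₁^r N₂^s (P_{a+2r, b+2s})`, and each `N₁^r N₂^s` is injective on
`P_{a+2r, b+2s}`. -/
theorem statement12
    {H : Type} [AddCommGroup H] [Module ℝ H]
    (Hgr : ℤ → ℤ → Submodule ℝ H) (N₁ N₂ : H →ₗ[ℝ] H)
    (hHL : IsHL Hgr N₁ N₂) (a b : ℕ) :
    (Hgr (a : ℤ) (b : ℤ) =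
      ⨆ rs : ℕ × ℕ,
        Submodule.map ((N₁ ^ rs.1) ∘ₗ (N₂ ^ rs.2))
          (prim Hgr N₁ N₂ (a + 2 * rs.1) (b + 2 * rs.2))) ∧
    (∀ rs : ℕ × ℕ,
      Disjoint
        (Submodule.map ((N₁ ^ rs.1) ∘ₗ (N₂ ^ rs.2))
          (prim Hgr N₁ N₂ (a + 2 * rs.1) (b + 2 * rs.2)))
        (⨆ (rs' : ℕ × ℕ) (_ : rs' ≠ rs),
          Submodule.map ((N₁ ^ rs'.1) ∘ₗ (N₂ ^ rs'.2))
            (prim Hgr N₁ N₂ (a + 2 * rs'.1) (b + 2 * rs'.2)))) ∧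
    (∀ rs : ℕ × ℕ, ∀ x ∈ prim Hgr N₁ N₂ (a + 2 * rs.1) (b + 2 * rs.2),
      ((N₁ ^ rs.1) ∘ₗ (N₂ ^ rs.2)) x = 0 → x = 0) := by
  refine ⟨le_antisymm ?_ ?_, ?_, ?_⟩
  · refine ((hHL.isL₁ b).span a).trans (iSup_le fun r => ?_)
    refine (Submodule.map_mono ((hHL.isL₂ (a + 2 * r)).span b)).trans ?_
    rw [Submodule.map_iSup]
    refine iSup_le fun s => ?_
    rw [← Submodule.map_comp]
    exact le_iSup (fun rs : ℕ × ℕ => Submodule.map ((N₁ ^ rs.1) ∘ₗ (N₂ ^ rs.2))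
          (prim Hgr N₁ N₂ (a + 2 * rs.1) (b + 2 * rs.2))) (r, s)
  · refine iSup_le fun rs => ?_
    rintro _ ⟨x, hx, rfl⟩
    have h1 := pow_mem (hHL.isL₂ (a + 2 * rs.1)).map rs.2 _ _ hx.1
    have h2 := pow_mem (hHL.isL₁ _).map rs.1 _ _ h1.1
    rw [LinearMap.comp_apply]
    convert h2 using 2 <;> (push_cast; ring)
  · change iSupIndep _
    rw [iSupIndep_iff_finsetSum_eq_zero_imp_eq_zero]
    intro S v hv h0 i hi
    classical
    have hv' : ∀ i : ℕ × ℕ, ∃ x ∈ prim Hgr N₁ N₂ (a + 2 * i.1) (b + 2 * i.2),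
        (N₁ ^ i.1) ((N₂ ^ i.2) x) = if i ∈ S then v i else 0 := by
      intro i
      split_ifs with hi
      · obtain ⟨x, hx, hxv⟩ := hv i hi
        exact ⟨x, hx, hxv⟩
      · exact ⟨0, zero_mem _, by simp⟩
    choose x hx hxv using hv'
    obtain ⟨n, hn⟩ : ∃ n : ℕ, S ⊆ Finset.range n ×ˢ Finset.range n := by
      refine ⟨S.sup (fun p => max p.1 p.2) + 1, fun p hp => ?_⟩
      have := Finset.le_sup (f := fun p : ℕ × ℕ => max p.1 p.2) hp
      simp only [Finset.mem_product, Finset.mem_range]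
      omega
    have key := hHL.indep a b n (fun r s => x (r, s)) (fun r s => hx (r, s)) (by
      rw [← Finset.sum_product' (f := fun r s => (N₁ ^ r) ((N₂ ^ s) (x (r, s))))]
      rw [← h0, ← Finset.sum_subset hn (f := fun p => (N₁ ^ p.1) ((N₂ ^ p.2) (x (p.1, p.2))))]
      · exact Finset.sum_congr rfl fun p hp => by rw [hxv, if_pos hp]
      · intro p _ hp
        rw [hxv, if_neg hp]) i.1 i.2
    have hin := Finset.mem_product.1 (hn hi)
    have := key (Finset.mem_range.1 hin.1) (Finset.mem_range.1 hin.2)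
    have h3 := hxv i
    rw [if_pos hi] at h3
    rw [← h3]
    rw [this, map_zero, map_zero]
  · intro rs x hx h0
    rw [LinearMap.comp_apply] at h0
    have h1 := pow_mem (hHL.isL₂ (a + 2 * rs.1)).map rs.2 _ _ hx.1
    have h2 := (hHL.isL₁ _).inj_le (by omega) h1.1 h0
    exact hHL.inj₂ _ (by omega) hx.1.1 h2
end

section
/- Let (H, N₁, N₂, ψ) be a polarized bigraded Hodge–Lefschetz structure. Then: (i) the operator w is invertible, and w^{−1}(N₁^r N₂^s x) = (−1)^{a+b} w(N₁^r N₂^s x) for all a, b, r, s ≥ 0 and x ∈ P_{a,b}; (ii) the bilinear form φ(x, y) = ψ(x, w y) is symmetric and positive definite on H; (iii) the primitive decomposition is orthogonal for φ: for all a, b, r, s, a', b', r', s' ≥ 0, x ∈ P_{a,b} and y ∈ P_{a',b'}, one has φ(N₁^r N₂^s x, N₁^{r'} N₂^{s'} y) = 0 unless r = r', s = s', a = a' and b = b'. -/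
namespace HLS

theorem lef_aux {H : Type} [AddCommGroup H] [Module ℝ H] (V : ℤ → Submodule ℝ H)
    (N : H →ₗ[ℝ] H) (S : Submodule ℝ H) (B : ℕ)
    (hB : ∀ a : ℤ, (B : ℤ) < a → V a = ⊥)
    (hN : ∀ a : ℤ, ∀ x ∈ V a, N x ∈ V (a - 2))
    (hsurj : ∀ a : ℕ, V (-(a : ℤ)) ≤ Submodule.map (N ^ a) (V (a : ℤ)))
    (hS : ∀ x ∈ S, N x ∈ S)
    (hP : ∀ a : ℕ, ∀ x ∈ V (a : ℤ), (N ^ (a + 1)) x = 0 → x ∈ S) (a : ℤ) : V a ≤ S := by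
  have hpow : ∀ n : ℕ, ∀ x ∈ S, (N ^ n) x ∈ S := by
    intro n
    induction n with
    | zero => intro x hx; simpa using hx
    | succ k ih => intro x hx; rw [pow_succ]; exact ih _ (hS x hx)
  have hNpow : ∀ n : ℕ, ∀ a : ℤ, ∀ x ∈ V a, (N ^ n) x ∈ V (a - 2 * n) := by
    intro n
    induction n with
    | zero => intro a x hx; simpa using hx
    | succ k ih =>
      intro a x hx
      rw [pow_succ]
      have := ih _ _ (hN a x hx)
      have e : a - 2 * ((k + 1 : ℕ) : ℤ) = a - 2 - 2 * (k : ℤ) := by push_cast; ring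
      rw [e]; exact this
  have hpos : ∀ k : ℕ, ∀ a : ℕ, B < a + k → V (a : ℤ) ≤ S := by
    intro k
    induction k using Nat.strong_induction_on with
    | _ k ih =>
      intro a hak x hx
      by_cases hk : k = 0
      · rw [hB a (by omega)] at hx
        rw [(Submodule.mem_bot ℝ).1 hx]; exact S.zero_mem
      have h1 : (N ^ (a + 1)) x ∈ V (-((a + 2 : ℕ) : ℤ)) := by
        have := hNpow (a + 1) a x hx
        have e : -((a + 2 : ℕ) : ℤ) = (a : ℤ) - 2 * ((a + 1 : ℕ) : ℤ) := by push_cast; ring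
        rw [e]; exact this
      obtain ⟨z, hz, hzx⟩ := hsurj (a + 2) h1
      have hzS : z ∈ S := ih (k - 1) (by omega) (a + 2) (by omega) hz
      have hNz : N z ∈ V (a : ℤ) := by
        have := hN _ z hz
        have e : (a : ℤ) = ((a + 2 : ℕ) : ℤ) - 2 := by push_cast; ring
        rw [e]; exact this
      have h2 : x - N z ∈ S := by
        refine hP a _ (Submodule.sub_mem _ hx hNz) ?_
        rw [map_sub, sub_eq_zero, ← hzx, pow_succ N (a + 1)]
        rfl
      have := S.add_mem h2 (hS z hzS)
      simpa using this
  rcases le_total 0 a with h | h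
  · obtain ⟨n, rfl⟩ := Int.eq_ofNat_of_zero_le h
    exact hpos (B + 1) n (by omega)
  · obtain ⟨n, hn⟩ := Int.eq_ofNat_of_zero_le (neg_nonneg.2 h)
    have : a = -(n : ℤ) := by omega
    subst this
    intro x hx
    obtain ⟨z, hz, rfl⟩ := hsurj n hx
    exact hpow n z (hpos (B + 1) n (by omega) hz)

section
variable {H : Type} [AddCommGroup H] [Module ℝ H]
    {Hgr : ℤ → ℤ → Submodule ℝ H} {N₁ N₂ : H →ₗ[ℝ] H} {ψ : H →ₗ[ℝ] H →ₗ[ℝ] ℝ}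

theorem IsHL.commute (h : IsHL Hgr N₁ N₂) : Commute N₁ N₂ := h.comm

theorem IsHL.pow₁ (h : IsHL Hgr N₁ N₂) (n : ℕ) : ∀ a b : ℤ, ∀ x ∈ Hgr a b,
    (N₁ ^ n) x ∈ Hgr (a - 2 * n) b := by
  induction n with
  | zero => intro a b x hx; simpa using hx
  | succ k ih =>
    intro a b x hx
    rw [pow_succ]
    have := ih _ _ _ (h.mapN₁ a b x hx)
    have e : a - 2 * ((k + 1 : ℕ) : ℤ) = a - 2 - 2 * (k : ℤ) := by push_cast; ring
    rw [e]; exact this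

theorem IsHL.pow₂ (h : IsHL Hgr N₁ N₂) (n : ℕ) : ∀ a b : ℤ, ∀ x ∈ Hgr a b,
    (N₂ ^ n) x ∈ Hgr a (b - 2 * n) := by
  induction n with
  | zero => intro a b x hx; simpa using hx
  | succ k ih =>
    intro a b x hx
    rw [pow_succ]
    have := ih _ _ _ (h.mapN₂ a b x hx)
    have e : b - 2 * ((k + 1 : ℕ) : ℤ) = b - 2 - 2 * (k : ℤ) := by push_cast; ring
    rw [e]; exact this

theorem IsHL.comm_apply (h : IsHL Hgr N₁ N₂) (m n : ℕ) (x : H) :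
    (N₁ ^ m) ((N₂ ^ n) x) = (N₂ ^ n) ((N₁ ^ m) x) :=
  LinearMap.congr_fun (h.commute.pow_pow m n).eq x

theorem IsHL.bounded (h : IsHL Hgr N₁ N₂) : ∃ B : ℕ, ∀ a b : ℤ,
    ((B : ℤ) < a ∨ (B : ℤ) < b) → Hgr a b = ⊥ := by
  have := h.findim
  have hf : {p : ℤ × ℤ | Hgr p.1 p.2 ≠ ⊥}.Finite :=
    WellFoundedGT.finite_ne_bot_of_iSupIndep h.internal.submodule_iSupIndep
  refine ⟨hf.toFinset.sup (fun p => p.1.natAbs + p.2.natAbs), fun a b hab => ?_⟩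
  by_contra hne
  have hmem : (a, b) ∈ hf.toFinset := by simpa using hne
  have := Finset.le_sup (f := fun p : ℤ × ℤ => p.1.natAbs + p.2.natAbs) hmem
  simp only at this
  omega

theorem IsHL.top_le (h : IsHL Hgr N₁ N₂) (S : Submodule ℝ H)
    (h1 : ∀ x ∈ S, N₁ x ∈ S) (h2 : ∀ x ∈ S, N₂ x ∈ S)
    (hP : ∀ a b : ℕ, prim Hgr N₁ N₂ a b ≤ S) : S = ⊤ := by
  obtain ⟨B, hB⟩ := h.bounded
  have key : ∀ a b : ℤ, Hgr a b ≤ S := by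
    intro a b
    refine lef_aux (fun a => Hgr a b) N₁ S B (fun a ha => hB a b (Or.inl ha))
      (fun a x hx => h.mapN₁ a b x hx) (fun a => (h.bijN₁ a b).1.ge) h1 ?_ a
    intro c x hx hxc
    refine lef_aux (fun b => Hgr c b ⊓ LinearMap.ker (N₁ ^ (c + 1))) N₂ S B
      ?_ ?_ ?_ h2 ?_ b ⟨hx, hxc⟩
    · intro b hb
      simp [hB c b (Or.inr hb)]
    · rintro b x ⟨hx, hx'⟩
      refine ⟨h.mapN₂ _ _ _ hx, ?_⟩
      have := h.comm_apply (c + 1) 1 x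
      rw [pow_one] at this
      rw [SetLike.mem_coe, LinearMap.mem_ker] at hx' ⊢
      rw [this, hx', map_zero]
    · rintro b y ⟨hy, hy'⟩
      have hy1 : y ∈ Hgr (c : ℤ) (-(b : ℤ)) := hy
      rw [← (h.bijN₂ c b).1] at hy1
      obtain ⟨z, hz, rfl⟩ := hy1
      refine ⟨z, ⟨hz, ?_⟩, rfl⟩
      refine (h.bijN₂ _ b).2 _ (h.pow₁ (c + 1) _ _ z hz) ?_
      rw [← h.comm_apply]; exact hy'
    · rintro b x ⟨hx, hx'⟩ hx2
      exact hP c b ⟨⟨hx, hx'⟩, hx2⟩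
  rw [eq_top_iff, ← h.internal.submodule_iSup_eq_top]
  exact iSup_le fun p => key p.1 p.2

/-- The piece `N₁^r N₂^s P_{a,b}`. -/
def piece (Hgr : ℤ → ℤ → Submodule ℝ H) (N₁ N₂ : H →ₗ[ℝ] H) (i : ℕ × ℕ × ℕ × ℕ) :
    Submodule ℝ H :=
  Submodule.map ((N₁ ^ i.2.2.1) ∘ₗ (N₂ ^ i.2.2.2)) (prim Hgr N₁ N₂ i.1 i.2.1)

theorem IsHL.iSup_piece (h : IsHL Hgr N₁ N₂) : ⨆ i, piece Hgr N₁ N₂ i = ⊤ := by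
  apply h.top_le
  · intro x hx
    suffices (⨆ i, piece Hgr N₁ N₂ i) ≤ (⨆ i, piece Hgr N₁ N₂ i).comap N₁ from this hx
    refine iSup_le ?_
    rintro ⟨a, b, r, s⟩ _ ⟨z, hz, rfl⟩
    refine Submodule.mem_iSup_of_mem (a, b, r + 1, s) ⟨z, hz, ?_⟩
    simp [pow_succ']
  · intro x hx
    suffices (⨆ i, piece Hgr N₁ N₂ i) ≤ (⨆ i, piece Hgr N₁ N₂ i).comap N₂ from this hx
    refine iSup_le ?_
    rintro ⟨a, b, r, s⟩ _ ⟨z, hz, rfl⟩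
    refine Submodule.mem_iSup_of_mem (a, b, r, s + 1) ⟨z, hz, ?_⟩
    have := h.comm_apply r 1 ((N₂ ^ s) z)
    rw [pow_one] at this
    simp [pow_succ', this]
  · intro a b x hx
    exact Submodule.mem_iSup_of_mem (a, b, 0, 0) ⟨x, hx, by simp⟩

theorem IsHL.zero (h : IsHL Hgr N₁ N₂) {a b m n : ℕ} {x : H} (hx : x ∈ prim Hgr N₁ N₂ a b)
    (hmn : a < m ∨ b < n) : (N₁ ^ m) ((N₂ ^ n) x) = 0 := by
  obtain ⟨⟨-, h1⟩, h2⟩ := hx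
  rw [SetLike.mem_coe, LinearMap.mem_ker] at h1
  rw [SetLike.mem_coe, LinearMap.mem_ker] at h2
  rcases hmn with hm | hn
  · rw [h.comm_apply, ← Nat.sub_add_cancel (Nat.succ_le_of_lt hm), pow_add, Module.End.mul_apply,
      Nat.succ_eq_add_one, h1, map_zero, map_zero]
  · rw [← Nat.sub_add_cancel (Nat.succ_le_of_lt hn), pow_add, Module.End.mul_apply,
      Nat.succ_eq_add_one, h2, map_zero, map_zero]

theorem skew_pow {N : H →ₗ[ℝ] H} (hs : ∀ x y : H, ψ (N x) y + ψ x (N y) = 0) (n : ℕ) :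
    ∀ x y, ψ ((N ^ n) x) y = (-1) ^ n * ψ x ((N ^ n) y) := by
  induction n with
  | zero => intro x y; simp
  | succ k ih =>
    intro x y
    rw [pow_succ' N, Module.End.mul_apply, eq_neg_of_add_eq_zero_left (hs _ _), ih,
      ← Module.End.mul_apply, ← pow_succ, ← pow_succ', pow_succ (-1 : ℝ)]
    ring

theorem move (h : IsHL Hgr N₁ N₂) (hψ : IsPolarization Hgr N₁ N₂ ψ) (m n p q : ℕ) (x y : H) :
    ψ ((N₁ ^ m) ((N₂ ^ n) x)) ((N₁ ^ p) ((N₂ ^ q) y)) =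
      (-1) ^ (m + n) * ψ x ((N₁ ^ (m + p)) ((N₂ ^ (n + q)) y)) := by
  rw [skew_pow hψ.skew₁, skew_pow hψ.skew₂, ← Module.End.mul_apply (N₁ ^ m), ← pow_add,
    ← h.comm_apply, ← Module.End.mul_apply (N₂ ^ n), ← pow_add, pow_add (-1 : ℝ), mul_assoc]

theorem move' (h : IsHL Hgr N₁ N₂) (hψ : IsPolarization Hgr N₁ N₂ ψ) (m n p q : ℕ) (x y : H) :
    ψ ((N₁ ^ m) ((N₂ ^ n) x)) ((N₁ ^ p) ((N₂ ^ q) y)) =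
      (-1) ^ (p + q) * ψ ((N₁ ^ (m + p)) ((N₂ ^ (n + q)) x)) y := by
  rw [move h hψ]
  have := move h hψ (m + p) (n + q) 0 0 x y
  simp only [pow_zero, Module.End.one_apply, add_zero] at this
  rw [this, ← mul_assoc, ← pow_add]
  congr 1
  have e : p + q + (m + p + (n + q)) = m + n + 2 * (p + q) := by ring
  rw [e, pow_add _ (m + n), pow_mul]
  simp

theorem orth_aux (h : IsHL Hgr N₁ N₂) (hψ : IsPolarization Hgr N₁ N₂ ψ)
    {a b r s a' b' r' s' : ℕ} {x y : H} (hx : x ∈ prim Hgr N₁ N₂ a b)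
    (hy : y ∈ prim Hgr N₁ N₂ a' b') (hr : r' ≤ a') (hs : s' ≤ b')
    (hne : ¬ (r = r' ∧ s = s' ∧ a = a' ∧ b = b')) :
    ψ ((N₁ ^ r) ((N₂ ^ s) x)) ((N₁ ^ (a' - r')) ((N₂ ^ (b' - s')) y)) = 0 := by
  by_cases hdeg : (a : ℤ) - 2 * r + (a' - 2 * (a' - r' : ℕ)) = 0 ∧
      (b : ℤ) - 2 * s + (b' - 2 * (b' - s' : ℕ)) = 0
  · obtain ⟨d1, d2⟩ := hdeg
    by_cases hc : r' < r ∨ s' < s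
    · rw [move h hψ, h.zero hy (by omega), map_zero, mul_zero]
    · rw [move' h hψ, h.zero hx (by omega), map_zero, LinearMap.zero_apply, mul_zero]
  · exact hψ.orth _ _ _ _ hdeg _ (h.pow₁ r _ _ _ (h.pow₂ s _ _ _ hx.1.1)) _
      (h.pow₁ _ _ _ _ (h.pow₂ _ _ _ _ hy.1.1))

variable {w : H →ₗ[ℝ] H}

theorem orth (h : IsHL Hgr N₁ N₂) (hψ : IsPolarization Hgr N₁ N₂ ψ) (hw : IsW Hgr N₁ N₂ w)
    (a b r s a' b' r' s' : ℕ) (x : H) (hx : x ∈ prim Hgr N₁ N₂ a b) (y : H)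
    (hy : y ∈ prim Hgr N₁ N₂ a' b') (hne : ¬ (r = r' ∧ s = s' ∧ a = a' ∧ b = b')) :
    ψ (((N₁ ^ r) ∘ₗ (N₂ ^ s)) x) (w (((N₁ ^ r') ∘ₗ (N₂ ^ s')) y)) = 0 := by
  rw [hw a' b' r' s' y hy]
  split_ifs with hc
  · rw [map_smul]
    have := orth_aux h hψ hx hy hc.1 hc.2 hne
    simp only [LinearMap.comp_apply, this, smul_zero]
  · simp

theorem diag (h : IsHL Hgr N₁ N₂) (hψ : IsPolarization Hgr N₁ N₂ ψ) (hw : IsW Hgr N₁ N₂ w)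
    {a b r s : ℕ} (hr : r ≤ a) (hs : s ≤ b) {x y : H} (hy : y ∈ prim Hgr N₁ N₂ a b) :
    ψ (((N₁ ^ r) ∘ₗ (N₂ ^ s)) x) (w (((N₁ ^ r) ∘ₗ (N₂ ^ s)) y)) =
      ((r.factorial : ℝ) / ((a - r).factorial : ℝ)) *
          ((s.factorial : ℝ) / ((b - s).factorial : ℝ)) *
        ψ x (((N₁ ^ a) ∘ₗ (N₂ ^ b)) y) := by
  rw [hw a b r s y hy, if_pos ⟨hr, hs⟩, map_smul]
  simp only [LinearMap.comp_apply, move h hψ, smul_eq_mul]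
  rw [Nat.add_sub_cancel' hr, Nat.add_sub_cancel' hs]
  have e : ((-1 : ℝ) ^ (r + s)) * (-1) ^ (r + s) = 1 := by
    rw [← mul_pow]; simp
  linear_combination ((r.factorial : ℝ) / ((a - r).factorial : ℝ)) *
          ((s.factorial : ℝ) / ((b - s).factorial : ℝ)) *
        ψ x ((N₁ ^ a) ((N₂ ^ b) y)) * e

theorem symm_aux (h : IsHL Hgr N₁ N₂) (hψ : IsPolarization Hgr N₁ N₂ ψ) (hw : IsW Hgr N₁ N₂ w)
    (x y : H) : ψ x (w y) = ψ y (w x) := by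
  have hx : x ∈ ⨆ i, piece Hgr N₁ N₂ i := by rw [h.iSup_piece]; trivial
  have hy : y ∈ ⨆ i, piece Hgr N₁ N₂ i := by rw [h.iSup_piece]; trivial
  induction hx using Submodule.iSup_induction' with
  | zero => simp
  | add u v _ _ hu hv => simp [hu, hv]
  | mem i u hu =>
    induction hy using Submodule.iSup_induction' with
    | zero => simp
    | add u v _ _ hu hv => simp [hu, hv]
    | mem j v hv =>
      obtain ⟨a, b, r, s⟩ := i
      obtain ⟨a', b', r', s'⟩ := j
      obtain ⟨u, hu, rfl⟩ := hu
      obtain ⟨v, hv, rfl⟩ := hv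
      simp only [SetLike.mem_coe] at hu hv ⊢
      by_cases he : r = r' ∧ s = s' ∧ a = a' ∧ b = b'
      · obtain ⟨rfl, rfl, rfl, rfl⟩ := he
        by_cases hc : r ≤ a ∧ s ≤ b
        · rw [diag h hψ hw hc.1 hc.2 hv, diag h hψ hw hc.1 hc.2 hu, hψ.primSymm a b u hu v hv]
        · rw [hw a b r s u hu, hw a b r s v hv, if_neg hc, if_neg hc]; simp
      · rw [orth h hψ hw _ _ _ _ _ _ _ _ u hu v hv he,
          orth h hψ hw _ _ _ _ _ _ _ _ v hv u hu (by tauto)]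

theorem piece_pos (h : IsHL Hgr N₁ N₂) (hψ : IsPolarization Hgr N₁ N₂ ψ) (hw : IsW Hgr N₁ N₂ w)
    (i : ℕ × ℕ × ℕ × ℕ) (x : H) (hx : x ∈ piece Hgr N₁ N₂ i) (hne : x ≠ 0) :
    0 < ψ x (w x) := by
  obtain ⟨a, b, r, s⟩ := i
  obtain ⟨u, hu, rfl⟩ := hx
  simp only [SetLike.mem_coe] at hu hne ⊢
  have hc : r ≤ a ∧ s ≤ b := by
    by_contra hc
    exact hne (h.zero hu (by omega))
  have hu0 : u ≠ 0 := by
    rintro rfl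
    simp at hne
  rw [diag h hψ hw hc.1 hc.2 hu]
  have := hψ.primPosDef a b u hu hu0
  positivity

theorem pos_aux (h : IsHL Hgr N₁ N₂) (hψ : IsPolarization Hgr N₁ N₂ ψ) (hw : IsW Hgr N₁ N₂ w)
    (x : H) (hne : x ≠ 0) : 0 < ψ x (w x) := by
  have hx : x ∈ ⨆ i, piece Hgr N₁ N₂ i := by rw [h.iSup_piece]; trivial
  obtain ⟨f, hf, rfl⟩ := (Submodule.mem_iSup_iff_exists_finsupp _ _).1 hx
  have e : ψ (f.sum fun _ y => y) (w (f.sum fun _ y => y)) =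
      ∑ i ∈ f.support, ψ (f i) (w (f i)) := by
    simp only [Finsupp.sum, map_sum, LinearMap.sum_apply]
    refine Finset.sum_congr rfl fun i hi => ?_
    refine Finset.sum_eq_single i ?_ ?_
    · intro j _ hji
      obtain ⟨u, hu, hu'⟩ := hf i
      obtain ⟨v, hv, hv'⟩ := hf j
      rw [← hu', ← hv']
      refine orth h hψ hw _ _ _ _ _ _ _ _ v hv u hu ?_
      rintro ⟨h1, h2, h3, h4⟩
      exact hji (by ext <;> simp [*])
    · intro hi'; exact absurd hi hi'
  rw [e]
  apply Finset.sum_pos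
  · intro i hi
    exact piece_pos h hψ hw i _ (hf i) (Finsupp.mem_support_iff.1 hi)
  · rw [Finset.nonempty_iff_ne_empty]
    intro h0
    apply hne
    simp [Finsupp.sum, h0]

theorem inv_aux (h : IsHL Hgr N₁ N₂) (hw : IsW Hgr N₁ N₂ w)
    (a b r s : ℕ) (x : H) (hx : x ∈ prim Hgr N₁ N₂ a b) :
    w (((-1 : ℝ) ^ (a + b)) • w (((N₁ ^ r) ∘ₗ (N₂ ^ s)) x)) = ((N₁ ^ r) ∘ₗ (N₂ ^ s)) x := by
  by_cases hc : r ≤ a ∧ s ≤ b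
  · rw [hw a b r s x hx, if_pos hc, map_smul, map_smul, hw a b _ _ x hx,
      if_pos ⟨Nat.sub_le _ _, Nat.sub_le _ _⟩, Nat.sub_sub_self hc.1, Nat.sub_sub_self hc.2,
      smul_smul, smul_smul]
    convert one_smul ℝ _ using 2
    have h1 : ((a - r).factorial : ℝ) ≠ 0 := by positivity
    have h2 : ((b - s).factorial : ℝ) ≠ 0 := by positivity
    have h3 : (r.factorial : ℝ) ≠ 0 := by positivity
    have h4 : (s.factorial : ℝ) ≠ 0 := by positivity
    have e : (-1 : ℝ) ^ (a + b) * ((-1) ^ (r + s) * (-1) ^ (a - r + (b - s))) = 1 := by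
      rw [← pow_add, ← pow_add]
      apply Even.neg_one_pow
      exact ⟨a + b, by omega⟩
    calc _ = ((-1 : ℝ) ^ (a + b) * ((-1) ^ (r + s) * (-1) ^ (a - r + (b - s)))) *
          (((r.factorial : ℝ) / (a - r).factorial) * ((a - r).factorial / r.factorial) *
          (((s.factorial : ℝ) / (b - s).factorial) * ((b - s).factorial / s.factorial))) := by ring
      _ = 1 := by rw [e]; field_simp
  · have : ((N₁ ^ r) ∘ₗ (N₂ ^ s)) x = 0 := h.zero hx (by omega)
    rw [this]; simp

theorem bij_aux (h : IsHL Hgr N₁ N₂) (hψ : IsPolarization Hgr N₁ N₂ ψ) (hw : IsW Hgr N₁ N₂ w) :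
    Function.Bijective w := by
  constructor
  · rw [injective_iff_map_eq_zero]
    intro x hx
    by_contra hne
    have := pos_aux h hψ hw x hne
    rw [hx, map_zero] at this
    exact lt_irrefl _ this
  · rw [← LinearMap.range_eq_top, eq_top_iff, ← h.iSup_piece]
    refine iSup_le ?_
    rintro ⟨a, b, r, s⟩ _ ⟨z, hz, rfl⟩
    exact ⟨_, inv_aux h hw a b r s z hz⟩

end

end HLS

open HLS in
/-- let `(H, N₁, N₂, ψ)` be a polarized bigraded Hodge–Lefschetz structure,
and let `w` be the operator defined by
`w(N₁^r N₂^s x) = (-1)^{r+s} (r!/(a-r)!)(s!/(b-s)!) N₁^{a-r} N₂^{b-s} x` on primitive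
elements.  Then (i) `w` is invertible with `w⁻¹(N₁^r N₂^s x) = (-1)^{a+b} w(N₁^r N₂^s x)` for
`x ∈ P_{a,b}`; (ii) `φ(x,y) = ψ(x, w y)` is symmetric and positive definite; and (iii) the
primitive decomposition is orthogonal for `φ`. -/
theorem statement13
    {H : Type} [AddCommGroup H] [Module ℝ H]
    (Hgr : ℤ → ℤ → Submodule ℝ H) (N₁ N₂ : H →ₗ[ℝ] H)
    (hHL : IsHL Hgr N₁ N₂)
    (ψ : H →ₗ[ℝ] H →ₗ[ℝ] ℝ) (hψ : IsPolarization Hgr N₁ N₂ ψ)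
    (w : H →ₗ[ℝ] H) (hw : IsW Hgr N₁ N₂ w) :
    -- (i) `w` is invertible, and `w⁻¹ = (-1)^{a+b} w` on `N₁^r N₂^s (P_{a,b})`
    (Function.Bijective w ∧
      ∀ a b r s : ℕ, ∀ x ∈ prim Hgr N₁ N₂ a b,
        w (((-1 : ℝ) ^ (a + b)) • w (((N₁ ^ r) ∘ₗ (N₂ ^ s)) x)) =
          ((N₁ ^ r) ∘ₗ (N₂ ^ s)) x) ∧
    -- (ii) `φ = ψ(·, w ·)` is symmetric and positive definite
    ((∀ x y : H, ψ x (w y) = ψ y (w x)) ∧ (∀ x : H, x ≠ 0 → 0 < ψ x (w x))) ∧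
    -- (iii) the primitive decomposition is orthogonal for `φ`
    (∀ a b r s a' b' r' s' : ℕ, ∀ x ∈ prim Hgr N₁ N₂ a b, ∀ y ∈ prim Hgr N₁ N₂ a' b',
      ¬ (r = r' ∧ s = s' ∧ a = a' ∧ b = b') →
      ψ (((N₁ ^ r) ∘ₗ (N₂ ^ s)) x) (w (((N₁ ^ r') ∘ₗ (N₂ ^ s')) y)) = 0) := by
  exact ⟨⟨bij_aux hHL hψ hw, inv_aux hHL hw⟩, ⟨symm_aux hHL hψ hw, pos_aux hHL hψ hw⟩,
    orth hHL hψ hw⟩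
end

section
/- Let d be a differential on a polarized bigraded Hodge–Lefschetz structure (H, N₁, N₂, ψ), with Laplacian Δ = d d* + d* d. Then the Laplacian commutes with both monodromy operators: ΔN₁ = N₁Δ and ΔN₂ = N₂Δ. -/
namespace HLS

variable {H : Type} [AddCommGroup H] [Module ℝ H]

/-- The monomial `N₁^i N₂^j y`. -/
def mono (N₁ N₂ : H →ₗ[ℝ] H) (i j : ℕ) : H →ₗ[ℝ] H := (N₁ ^ i) ∘ₗ (N₂ ^ j)

theorem mono_swap {N₁ N₂ : H →ₗ[ℝ] H} (hc : Commute N₁ N₂) (i j : ℕ) :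
    mono N₁ N₂ i j = mono N₂ N₁ j i :=
  (hc.pow_pow i j).eq

theorem N1_mono (N₁ N₂ : H →ₗ[ℝ] H) (i j : ℕ) (y : H) :
    N₁ (mono N₁ N₂ i j y) = mono N₁ N₂ (i + 1) j y := by
  simp [mono, pow_succ']

theorem N2_mono {N₁ N₂ : H →ₗ[ℝ] H} (hc : Commute N₁ N₂) (i j : ℕ) (y : H) :
    N₂ (mono N₁ N₂ i j y) = mono N₁ N₂ i (j + 1) y := by
  rw [mono_swap hc, mono_swap hc, N1_mono]

theorem mono_N2 (N₁ N₂ : H →ₗ[ℝ] H) (i j : ℕ) (y : H) :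
    mono N₁ N₂ i j (N₂ y) = mono N₁ N₂ i (j + 1) y := by
  simp [mono, pow_succ]

theorem mono_N1 {N₁ N₂ : H →ₗ[ℝ] H} (hc : Commute N₁ N₂) (i j : ℕ) (y : H) :
    mono N₁ N₂ i j (N₁ y) = mono N₁ N₂ (i + 1) j y := by
  rw [mono_swap hc, mono_swap hc, mono_N2]

theorem mono_zero_right {N₁ N₂ : H →ₗ[ℝ] H} {i j q : ℕ} {y : H}
    (hy : (N₂ ^ q) y = 0) (h : q ≤ j) : mono N₁ N₂ i j y = 0 := by
  obtain ⟨k, rfl⟩ := Nat.exists_eq_add_of_le' h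
  simp [mono, pow_add, hy]

theorem mono_zero_left {N₁ N₂ : H →ₗ[ℝ] H} (hc : Commute N₁ N₂) {i j p : ℕ} {y : H}
    (hy : (N₁ ^ p) y = 0) (h : p ≤ i) : mono N₁ N₂ i j y = 0 := by
  rw [mono_swap hc]; exact mono_zero_right hy h

/-- The coefficient of `w` in one variable (`p = a + 1`). -/
noncomputable def cf (p r : ℕ) : ℝ :=
  if r < p then (-1 : ℝ) ^ r * ((r.factorial : ℝ) / ((p - 1 - r).factorial : ℝ)) else 0

theorem cf_self (p : ℕ) : cf p p = 0 := by simp [cf]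

theorem cf_step0 (u t : ℕ) : -((t : ℝ) + 1) * cf (u + t + 1) t = cf (u + t + 2) (t + 1) := by
  have h1 : u + t + 1 - 1 - t = u := by omega
  have h2 : u + t + 2 - 1 - (t + 1) = u := by omega
  rw [cf, cf, if_pos (by omega), if_pos (by omega), h1, h2, Nat.factorial_succ]
  push_cast
  ring

theorem cf_step1 (u t : ℕ) : ((u : ℝ) + 1) * cf (u + t + 2) t = cf (u + t + 1) t := by
  have h1 : u + t + 1 - 1 - t = u := by omega
  have h2 : u + t + 2 - 1 - t = u + 1 := by omega
  rw [cf, cf, if_pos (by omega), if_pos (by omega), h1, h2, Nat.factorial_succ]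
  have : (u.factorial : ℝ) ≠ 0 := by positivity
  push_cast
  field_simp

theorem cf_stepX (u t : ℕ) :
    ((t : ℝ) + 1) * ((u : ℝ) + 1) * cf (u + t + 2) t = - cf (u + t + 2) (t + 1) := by
  rw [mul_assoc, cf_step1, ← cf_step0]; ring

/-- Abstract data used for the computation. -/
structure Core (P : ℕ → ℕ → Submodule ℝ H) (N₁ N₂ w dd : H →ₗ[ℝ] H) : Prop where
  comm : Commute N₁ N₂
  k1 : ∀ p q, ∀ y ∈ P p q, (N₁ ^ p) y = 0
  k2 : ∀ p q, ∀ y ∈ P p q, (N₂ ^ q) y = 0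
  hw : ∀ p q r s, ∀ y ∈ P p q, w (mono N₁ N₂ r s y) =
    (cf p r * cf q s) • mono N₁ N₂ (p - 1 - r) (q - 1 - s) y
  span : ∀ f g : H →ₗ[ℝ] H, (∀ a b r s, r ≤ a → s ≤ b → ∀ x ∈ P (a + 1) (b + 1),
    f (mono N₁ N₂ r s x) = g (mono N₁ N₂ r s x)) → f = g
  dec : ∀ a b, ∀ x ∈ P (a + 1) (b + 1), ∃ y00 ∈ P a b, ∃ y10 ∈ P (a + 2) b,
    ∃ y01 ∈ P a (b + 2), ∃ y11 ∈ P (a + 2) (b + 2),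
    dd x = y00 + N₁ y10 + N₂ y01 + N₁ (N₂ y11)
  d1 : Commute dd N₁
  d2 : Commute dd N₂
  sq : ∀ x, dd (dd x) = 0

theorem Core.swap {P : ℕ → ℕ → Submodule ℝ H} {N₁ N₂ w dd : H →ₗ[ℝ] H}
    (h : Core P N₁ N₂ w dd) : Core (fun p q => P q p) N₂ N₁ w dd where
  comm := h.comm.symm
  k1 := fun p q y hy => h.k2 q p y hy
  k2 := fun p q y hy => h.k1 q p y hy
  hw := fun p q r s y hy => by
    rw [← mono_swap h.comm, ← mono_swap h.comm, h.hw q p s r y hy, mul_comm]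
  span := fun f g hfg => h.span f g fun a b r s hr hs x hx => by
    rw [mono_swap h.comm]; exact hfg b a s r hs hr x hx
  dec := fun a b x hx => by
    obtain ⟨y00, h00, y10, h10, y01, h01, y11, h11, e⟩ := h.dec b a x hx
    refine ⟨y00, h00, y01, h01, y10, h10, y11, h11, ?_⟩
    have : N₁ (N₂ y11) = N₂ (N₁ y11) := LinearMap.congr_fun h.comm.eq y11
    rw [e, this]; abel
  d1 := h.d2
  d2 := h.d1
  sq := h.sq

section
variable {P : ℕ → ℕ → Submodule ℝ H} {N₁ N₂ w dd : H →ₗ[ℝ] H}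

theorem Core.d_mono (h : Core P N₁ N₂ w dd) (r s : ℕ) (x : H) :
    dd (mono N₁ N₂ r s x) = mono N₁ N₂ r s (dd x) := by
  have : Commute dd (mono N₁ N₂ r s) := (h.d1.pow_right r).mul_right (h.d2.pow_right s)
  exact LinearMap.congr_fun this.eq x

theorem Core.wX (h : Core P N₁ N₂ w dd) (p q r s : ℕ) (hs : s ≤ q) (y : H) (hy : y ∈ P p q) :
    w (((s : ℝ) * ((q : ℝ) - s)) • mono N₁ N₂ r (s - 1) y) = - N₂ (w (mono N₁ N₂ r s y)) := by
  rw [map_smul, h.hw p q _ _ y hy, h.hw p q _ _ y hy, map_smul, N2_mono h.comm]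
  rcases s with _ | t
  · have : mono N₁ N₂ (p - 1 - r) (q - 1 - 0 + 1) y = 0 :=
      mono_zero_right (h.k2 p q y hy) (by omega)
    rw [this]; simp
  · rcases hs.eq_or_lt with rfl | hlt
    · simp [cf_self]
    · obtain ⟨u, rfl⟩ := Nat.exists_eq_add_of_le' hlt
      have e1 : u + (t + 1).succ - 1 - (t + 1) + 1 = u + 1 := by omega
      have e2 : u + (t + 1).succ - 1 - (t + 1 - 1) = u + 1 := by omega
      have e3 : u + (t + 1).succ = u + t + 2 := by omega
      rw [e1, e2, e3, smul_smul, ← neg_smul]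
      congr 1
      have := cf_stepX u t
      simp only [Nat.add_sub_cancel]
      push_cast
      linear_combination (cf p r) * this

theorem Core.w00 (h : Core P N₁ N₂ w dd) (a b r s : ℕ) (hr : r ≤ a) (hs : s ≤ b) (y : H)
    (hy : y ∈ P a b) :
    w (((r : ℝ) * s) • mono N₁ N₂ (r - 1) (s - 1) y) =
      (cf (a + 1) r * cf (b + 1) s) • mono N₁ N₂ (a - r) (b - s) y := by
  rw [map_smul, h.hw a b _ _ y hy]
  rcases r with _ | r
  · rw [mono_zero_left h.comm (h.k1 a b y hy) (i := a - 0) (by omega)]; simp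
  rcases s with _ | s
  · rw [mono_zero_right (h.k2 a b y hy) (j := b - 0) (by omega)]; simp
  obtain ⟨u, rfl⟩ := Nat.exists_eq_add_of_le' hr
  obtain ⟨v, rfl⟩ := Nat.exists_eq_add_of_le' hs
  have e1 : u + (r + 1) - 1 - (r + 1 - 1) = u := by omega
  have e2 : v + (s + 1) - 1 - (s + 1 - 1) = v := by omega
  rw [e1, e2, smul_smul]
  simp only [add_tsub_cancel_right]
  congr 1
  have h1 := cf_step0 u r
  have h2 := cf_step0 v s
  simp only [← add_assoc, Nat.add_sub_cancel] at *
  push_cast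
  rw [← h1, ← h2]; ring

theorem Core.w10 (h : Core P N₁ N₂ w dd) (a b r s : ℕ) (hr : r ≤ a + 1) (hs : s ≤ b) (y : H)
    (hy : y ∈ P (a + 2) b) :
    w ((-((a : ℝ) + 1 - r) * s) • mono N₁ N₂ r (s - 1) y) =
      (cf (a + 1) r * cf (b + 1) s) • mono N₁ N₂ (a - r + 1) (b - s) y := by
  rw [map_smul, h.hw _ b _ _ y hy]
  rcases s with _ | s
  · rw [mono_zero_right (h.k2 _ b y hy) (j := b - 0) (by omega)]; simp
  rcases hr.eq_or_lt with rfl | hr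
  · simp [cf_self]
  obtain ⟨u, rfl⟩ := Nat.exists_eq_add_of_le' (Nat.lt_succ_iff.mp hr)
  obtain ⟨v, rfl⟩ := Nat.exists_eq_add_of_le' hs
  have e1 : u + r + 2 - 1 - r = u + 1 := by omega
  have e2 : v + (s + 1) - 1 - (s + 1 - 1) = v := by omega
  rw [e1, e2, smul_smul]
  simp only [add_tsub_cancel_right]
  congr 1
  have h1 := cf_step1 u r
  have h2 := cf_step0 v s
  simp only [← add_assoc, Nat.add_sub_cancel] at *
  push_cast
  rw [← h1, ← h2]; ring

theorem Core.w11 (h : Core P N₁ N₂ w dd) (a b r s : ℕ) (hr : r ≤ a + 1) (hs : s ≤ b) (y : H)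
    (hy : y ∈ P (a + 2) (b + 2)) :
    w ((((a : ℝ) + 1 - r) * ((b : ℝ) + 1 - s)) • mono N₁ N₂ r s y) =
      (cf (a + 1) r * cf (b + 1) s) • mono N₁ N₂ (a - r + 1) (b - s + 1) y := by
  rw [map_smul, h.hw _ _ _ _ y hy]
  rcases hr.eq_or_lt with rfl | hr
  · simp [cf_self]
  obtain ⟨u, rfl⟩ := Nat.exists_eq_add_of_le' (Nat.lt_succ_iff.mp hr)
  obtain ⟨v, rfl⟩ := Nat.exists_eq_add_of_le' hs
  have e1 : u + r + 2 - 1 - r = u + 1 := by omega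
  have e2 : v + s + 2 - 1 - s = v + 1 := by omega
  rw [e1, e2, smul_smul]
  simp only [add_tsub_cancel_right]
  congr 1
  have h1 := cf_step1 u r
  have h2 := cf_step1 v s
  push_cast
  rw [← h1, ← h2]; ring

/-- `w⁻¹ d w` on a monomial. -/
theorem Core.D_mono (h : Core P N₁ N₂ w dd) (a b r s : ℕ) (hr : r ≤ a + 1) (hs : s ≤ b)
    (x : H) (hx : x ∈ P (a + 1) (b + 1)) (y00 y10 y01 y11 : H) (h00 : y00 ∈ P a b)
    (h10 : y10 ∈ P (a + 2) b) (h01 : y01 ∈ P a (b + 2)) (h11 : y11 ∈ P (a + 2) (b + 2))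
    (e : dd x = y00 + N₁ y10 + N₂ y01 + N₁ (N₂ y11)) :
    dd (w (mono N₁ N₂ r s x)) = w (((r : ℝ) * s) • mono N₁ N₂ (r - 1) (s - 1) y00
      + (-((a : ℝ) + 1 - r) * s) • mono N₁ N₂ r (s - 1) y10
      + (-((b : ℝ) + 1 - s) * r) • mono N₁ N₂ (r - 1) s y01
      + (((a : ℝ) + 1 - r) * ((b : ℝ) + 1 - s)) • mono N₁ N₂ r s y11) := by
  rcases hr.eq_or_lt with rfl | hr'
  · have z0 : mono N₁ N₂ (a + 1) s x = 0 := mono_zero_left h.comm (h.k1 _ _ x hx) le_rfl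
    have z1 : mono N₁ N₂ (a + 1 - 1) (s - 1) y00 = 0 :=
      mono_zero_left h.comm (h.k1 _ _ _ h00) (by omega)
    have z2 : mono N₁ N₂ (a + 1 - 1) s y01 = 0 :=
      mono_zero_left h.comm (h.k1 _ _ _ h01) (by omega)
    rw [z0, z1, z2]; simp
  · have hr'' : r ≤ a := by omega
    have q01 := h.swap.w10 b a s r (by omega) hr'' y01 h01
    rw [← mono_swap h.comm, ← mono_swap h.comm] at q01
    rw [map_add, map_add, map_add, h.w00 a b r s hr'' hs _ h00, h.w10 a b r s hr hs _ h10, q01,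
      h.w11 a b r s hr hs _ h11, h.hw _ _ _ _ x hx, map_smul, h.d_mono, e]
    simp only [map_add, mono_N1 h.comm, mono_N2, Nat.add_sub_cancel, smul_add]
    rw [mul_comm (cf (b + 1) s)]

theorem Core.main (h : Core P N₁ N₂ w dd) (winv : H →ₗ[ℝ] H)
    (h1 : ∀ x, winv (w x) = x) :
    lap w winv dd ∘ₗ N₁ = N₁ ∘ₗ lap w winv dd := by
  have key : N₁ ∘ₗ (winv ∘ₗ dd ∘ₗ w) - (winv ∘ₗ dd ∘ₗ w) ∘ₗ N₁ =
      (-(winv ∘ₗ N₂ ∘ₗ w)) ∘ₗ dd - dd ∘ₗ (-(winv ∘ₗ N₂ ∘ₗ w)) := by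
    have X : ∀ p q r s, s ≤ q → ∀ y ∈ P p q, winv (N₂ (w (mono N₁ N₂ r s y))) =
        - (((s : ℝ) * ((q : ℝ) - s)) • mono N₁ N₂ r (s - 1) y) := by
      intro p q r s hs y hy
      rw [← neg_neg (N₂ _), ← h.wX p q r s hs y hy, map_neg, h1]
    apply h.span
    intro a b r s hr hs x hx
    obtain ⟨y00, h00, y10, h10, y01, h01, y11, h11, e⟩ := h.dec a b x hx
    have D := fun r hr => h.D_mono a b r s hr hs x hx y00 y10 y01 y11 h00 h10 h01 h11 e
    simp only [LinearMap.sub_apply, LinearMap.comp_apply, LinearMap.neg_apply, N1_mono]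
    rw [D r (by omega), D (r + 1) (by omega), h1, h1, X _ _ r s (by omega) x hx, h.d_mono, e]
    simp only [map_add, map_neg, map_smul, mono_N1 h.comm, mono_N2, h.d_mono, e, N1_mono]
    rw [X _ _ _ _ hs _ h00, X _ _ _ _ hs _ h10, X _ _ _ _ (by omega) _ h01,
      X _ _ _ _ (by omega) _ h11]
    simp only [Nat.add_sub_cancel]
    push_cast
    rcases r with _ | r <;> rcases s with _ | s <;>
      simp only [Nat.add_sub_cancel, Nat.cast_zero, Nat.cast_add, Nat.cast_one, zero_add,
        Nat.zero_sub] <;> module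
  ext x
  have k := fun x => LinearMap.congr_fun key x
  have d1 : ∀ x, dd (N₁ x) = N₁ (dd x) := fun x => LinearMap.congr_fun h.d1.eq x
  simp only [LinearMap.sub_apply, LinearMap.comp_apply, LinearMap.neg_apply] at k
  have ka := congrArg dd (k x)
  have kb := k (dd x)
  simp only [map_sub, map_neg, h.sq, map_zero, d1] at ka kb
  simp only [lap, dstar, LinearMap.add_apply, LinearMap.comp_apply, LinearMap.neg_apply,
    map_add, map_neg, d1]
  rw [← sub_eq_zero]
  have := congrArg₂ (· + ·) ka kb
  rw [← sub_eq_zero] at this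
  rw [← this]
  abel

end

/-- One-variable Lefschetz property. -/
structure Lef (G : ℤ → Submodule ℝ H) (N : H →ₗ[ℝ] H) : Prop where
  map : ∀ m, ∀ x ∈ G m, N x ∈ G (m - 2)
  surj : ∀ m : ℕ, ∀ v ∈ G (-(m : ℤ)), ∃ u ∈ G m, (N ^ m) u = v

theorem pow_map {G : ℤ → Submodule ℝ H} {N : H →ₗ[ℝ] H}
    (h : ∀ m, ∀ x ∈ G m, N x ∈ G (m - 2)) (k : ℕ) (m : ℤ) (x : H) (hx : x ∈ G m) :
    (N ^ k) x ∈ G (m - 2 * k) := by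
  induction k with
  | zero => simpa using hx
  | succ k ih =>
    have := h _ _ ih
    rw [pow_succ', Module.End.mul_apply]
    convert this using 2
    push_cast; ring

theorem Lef.dec {G : ℤ → Submodule ℝ H} {N : H →ₗ[ℝ] H} (h : Lef G N) (a : ℕ) (v : H)
    (hv : v ∈ G ((a : ℤ) - 1)) (hk : (N ^ (a + 1)) v = 0) :
    ∃ y ∈ G ((a : ℤ) - 1), ∃ y' ∈ G ((a : ℤ) + 1), (N ^ a) y = 0 ∧ (N ^ (a + 2)) y' = 0 ∧
      v = y + N y' := by
  have h1 := pow_map h.map a _ v hv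
  obtain ⟨u, hu, e⟩ := h.surj (a + 1) ((N ^ a) v) (by
    convert h1 using 2; push_cast; ring)
  have hu' : u ∈ G ((a : ℤ) + 1) := by exact_mod_cast hu
  refine ⟨v - N u, ?_, u, hu', ?_, ?_, by abel⟩
  · refine (G _).sub_mem hv ?_
    have := h.map _ _ hu'
    convert this using 2; ring
  · rw [map_sub, ← Module.End.mul_apply, ← pow_succ, e, sub_self]
  · rw [pow_succ', Module.End.mul_apply, e, ← Module.End.mul_apply, ← pow_succ', hk]

theorem Lef.span {G : ℤ → Submodule ℝ H} {N : H →ₗ[ℝ] H} (h : Lef G N) (M : ℤ)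
    (hM : ∀ m, M < m → G m = ⊥) (S : Submodule ℝ H)
    (hS : ∀ a r : ℕ, r ≤ a → ∀ x ∈ G a, (N ^ (a + 1)) x = 0 → (N ^ r) x ∈ S) (m : ℤ) :
    G m ≤ S := by
  have pos : ∀ k : ℕ, ∀ a : ℕ, M < a + k → ∀ v ∈ G a, ∀ r : ℕ, (N ^ r) v ∈ S := by
    intro k
    induction k with
    | zero =>
      intro a ha v hv r
      rw [hM _ (by simpa using ha)] at hv
      rw [(Submodule.mem_bot ℝ).1 hv]; simp
    | succ k ih =>
      intro a ha v hv r
      obtain ⟨y, hy, y', hy', e1, e2, rfl⟩ : ∃ y ∈ G a, ∃ y' ∈ G ((a + 2 : ℕ) : ℤ),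
          (N ^ (a + 1)) y = 0 ∧ True ∧ v = y + N y' := by
        have h1 := pow_map h.map (a + 1) _ v hv
        obtain ⟨u, hu, e⟩ := h.surj (a + 2) ((N ^ (a + 1)) v) (by
          convert h1 using 2; push_cast; ring)
        refine ⟨v - N u, ?_, u, hu, ?_, trivial, by abel⟩
        · refine (G _).sub_mem hv ?_
          have := h.map _ _ hu
          convert this using 2; push_cast; ring
        · rw [map_sub, ← Module.End.mul_apply, ← pow_succ, e, sub_self]
      rw [map_add]
      refine S.add_mem ?_ ?_
      · by_cases hr : r ≤ a
        · exact hS a r hr y hy e1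
        · obtain ⟨j, rfl⟩ := Nat.exists_eq_add_of_le' (Nat.lt_of_not_le hr)
          rw [pow_add, Module.End.mul_apply, e1]; simp
      · rw [← Module.End.mul_apply, ← pow_succ]
        exact ih (a + 2) (by push_cast at ha ⊢; linarith) y' hy' _
  intro v hv
  have big : ∀ a : ℕ, M < a + (M.toNat + 1 : ℕ) := by intro a; omega
  rcases Int.eq_nat_or_neg m with ⟨n, rfl | rfl⟩
  · simpa using pos _ n (big n) v hv 0
  · obtain ⟨u, hu, rfl⟩ := h.surj n v hv
    exact pos _ n (big n) u hu n

/-- A two-variable Lefschetz property, weaker than `IsHL`, symmetric in the two variables. -/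
structure BiLef (Hgr : ℤ → ℤ → Submodule ℝ H) (N₁ N₂ : H →ₗ[ℝ] H) : Prop where
  map1 : ∀ a b : ℤ, ∀ x ∈ Hgr a b, N₁ x ∈ Hgr (a - 2) b
  map2 : ∀ a b : ℤ, ∀ x ∈ Hgr a b, N₂ x ∈ Hgr a (b - 2)
  comm : Commute N₁ N₂
  surj : ∀ (a : ℕ) (b : ℤ), ∀ v ∈ Hgr (-(a : ℤ)) b, ∃ u ∈ Hgr a b, (N₁ ^ a) u = v
  inj : ∀ (a : ℕ) (b : ℤ), ∀ x ∈ Hgr (a : ℤ) b, (N₁ ^ a) x = 0 → x = 0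

theorem BiLef.lef {Hgr : ℤ → ℤ → Submodule ℝ H} {N₁ N₂ : H →ₗ[ℝ] H} (h : BiLef Hgr N₁ N₂)
    (b : ℤ) (k : ℕ) : Lef (fun m => Hgr m b ⊓ LinearMap.ker (N₂ ^ k)) N₁ where
  map := by
    rintro m x ⟨hx, hk⟩
    refine ⟨h.map1 _ _ _ hx, ?_⟩
    have : (N₂ ^ k) (N₁ x) = N₁ ((N₂ ^ k) x) :=
      LinearMap.congr_fun (h.comm.pow_right k).eq.symm x
    exact this.trans (by rw [LinearMap.mem_ker.1 hk, map_zero])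
  surj := by
    rintro m v ⟨hv, hk⟩
    obtain ⟨u, hu, rfl⟩ := h.surj m b v hv
    refine ⟨u, ⟨hu, ?_⟩, rfl⟩
    have : (N₂ ^ k) ((N₁ ^ m) u) = (N₁ ^ m) ((N₂ ^ k) u) :=
      LinearMap.congr_fun (h.comm.pow_pow m k).eq.symm u
    have hk : (N₂ ^ k) ((N₁ ^ m) u) = 0 := hk
    rw [this] at hk
    exact h.inj m _ _ (pow_map (G := fun c => Hgr m c) (h.map2 m) k b u hu) hk

theorem BiLef.lef0 {Hgr : ℤ → ℤ → Submodule ℝ H} {N₁ N₂ : H →ₗ[ℝ] H} (h : BiLef Hgr N₁ N₂)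
    (b : ℤ) : Lef (fun m => Hgr m b) N₁ where
  map := fun m => h.map1 m b
  surj := fun m => h.surj m b

theorem IsHL.biLef {Hgr : ℤ → ℤ → Submodule ℝ H} {N₁ N₂ : H →ₗ[ℝ] H} (h : IsHL Hgr N₁ N₂) :
    BiLef Hgr N₁ N₂ where
  map1 := h.mapN₁
  map2 := h.mapN₂
  comm := h.comm
  surj := fun a b v hv => by rw [← (h.bijN₁ a b).1] at hv; simpa using hv
  inj := fun a b => (h.bijN₁ a b).2

theorem IsHL.biLef' {Hgr : ℤ → ℤ → Submodule ℝ H} {N₁ N₂ : H →ₗ[ℝ] H} (h : IsHL Hgr N₁ N₂) :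
    BiLef (fun a b => Hgr b a) N₂ N₁ where
  map1 := fun a b => h.mapN₂ b a
  map2 := fun a b => h.mapN₁ b a
  comm := h.comm.symm
  surj := fun a b v hv => by rw [← (h.bijN₂ b a).1] at hv; simpa using hv
  inj := fun a b => (h.bijN₂ b a).2

theorem IsHL.bound {Hgr : ℤ → ℤ → Submodule ℝ H} {N₁ N₂ : H →ₗ[ℝ] H} (h : IsHL Hgr N₁ N₂) :
    ∃ M : ℤ, ∀ a b, (M < a ∨ M < b) → Hgr a b = ⊥ := by
  have := h.findim
  have hf : {p : ℤ × ℤ | Hgr p.1 p.2 ≠ ⊥}.Finite :=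
    WellFoundedGT.finite_ne_bot_of_iSupIndep h.internal.submodule_iSupIndep
  obtain ⟨M1, h1⟩ := (hf.image Prod.fst).bddAbove
  obtain ⟨M2, h2⟩ := (hf.image Prod.snd).bddAbove
  refine ⟨max M1 M2, fun a b hab => ?_⟩
  by_contra hne
  have i1 : a ≤ M1 := h1 ⟨(a, b), hne, rfl⟩
  have i2 : b ≤ M2 := h2 ⟨(a, b), hne, rfl⟩
  omega

/-- The shifted primitive parts. -/
def shp (Hgr : ℤ → ℤ → Submodule ℝ H) (N₁ N₂ : H →ₗ[ℝ] H) (p q : ℕ) : Submodule ℝ H :=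
  Hgr ((p : ℤ) - 1) ((q : ℤ) - 1) ⊓ LinearMap.ker (N₁ ^ p) ⊓ LinearMap.ker (N₂ ^ q)

theorem shp_succ (Hgr : ℤ → ℤ → Submodule ℝ H) (N₁ N₂ : H →ₗ[ℝ] H) (a b : ℕ) :
    shp Hgr N₁ N₂ (a + 1) (b + 1) = prim Hgr N₁ N₂ a b := by
  simp [shp, prim]

theorem core_of {Hgr : ℤ → ℤ → Submodule ℝ H} {N₁ N₂ : H →ₗ[ℝ] H}
    (hHL : IsHL Hgr N₁ N₂) (ψ : H →ₗ[ℝ] H →ₗ[ℝ] ℝ)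
    (w : H →ₗ[ℝ] H) (hw : IsW Hgr N₁ N₂ w)
    (dd : H →ₗ[ℝ] H) (hd : IsDifferential Hgr N₁ N₂ ψ dd) :
    Core (shp Hgr N₁ N₂) N₁ N₂ w dd where
  comm := hHL.comm
  k1 := fun p q y hy => hy.1.2
  k2 := fun p q y hy => hy.2
  d1 := hd.commN₁
  d2 := hd.commN₂
  sq := hd.sq
  hw := by
    intro p q r s y hy
    rcases p with _ | a
    · have : y = 0 := by simpa using hy.1.2
      simp [this]
    rcases q with _ | b
    · have : y = 0 := by simpa using hy.2
      simp [this]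
    rw [shp_succ] at hy
    have := hw a b r s y hy
    rw [mono, this]
    simp only [cf, Nat.lt_succ_iff, Nat.add_sub_cancel]
    by_cases h1 : r ≤ a <;> by_cases h2 : s ≤ b <;> simp [h1, h2, mono]
    congr 1
    ring
  span := by
    intro f g hfg
    obtain ⟨M, hM⟩ := hHL.bound
    have key : ∀ m n, Hgr m n ≤ LinearMap.eqLocus f g := by
      intro m n
      have L1 := hHL.biLef.lef0 n
      have := L1.span M (fun m hm => by simp [hM m n (Or.inl hm)]) (LinearMap.eqLocus f g) ?_ m
      · exact this
      intro a r hr x hx hxk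
      have L2 := hHL.biLef'.lef a (a + 1)
      have := L2.span M (fun m hm => by simp [hM a m (Or.inr hm)])
        ((LinearMap.eqLocus f g).comap (N₁ ^ r)) ?_ n
      · exact this ⟨hx, hxk⟩
      intro b s hs z hz hzk
      exact hfg a b r s hr hs z (by rw [shp_succ]; exact ⟨hz, hzk⟩)
    have top : (⊤ : Submodule ℝ H) ≤ LinearMap.eqLocus f g := by
      rw [← hHL.internal.submodule_iSup_eq_top]
      exact iSup_le fun p => key p.1 p.2
    ext x
    exact top (Submodule.mem_top (x := x))
  dec := by
    intro a b x hx
    have hx0 := hx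
    rw [shp_succ] at hx
    have dk1 : (N₁ ^ (a + 1)) (dd x) = 0 := by
      have c : Commute dd (N₁ ^ (a + 1)) := Commute.pow_right hd.commN₁ _
      have := LinearMap.congr_fun c.eq x
      simp only [Module.End.mul_apply] at this
      rw [← this, LinearMap.mem_ker.1 hx.1.2, map_zero]
    have dk2 : (N₂ ^ (b + 1)) (dd x) = 0 := by
      have c : Commute dd (N₂ ^ (b + 1)) := Commute.pow_right hd.commN₂ _
      have := LinearMap.congr_fun c.eq x
      simp only [Module.End.mul_apply] at this
      rw [← this, LinearMap.mem_ker.1 hx.2, map_zero]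
    obtain ⟨y, hy, y', hy', e1, e2, e⟩ := (hHL.biLef.lef ((b : ℤ) - 1) (b + 1)).dec a (dd x)
      ⟨hd.mem _ _ _ hx.1.1, dk2⟩ dk1
    obtain ⟨y00, g00, y01, g01, e00, e01, f0⟩ :=
      (hHL.biLef'.lef ((a : ℤ) - 1) a).dec b y ⟨hy.1, e1⟩ hy.2
    obtain ⟨y10, g10, y11, g11, e10, e11, f1⟩ :=
      (hHL.biLef'.lef ((a : ℤ) + 1) (a + 2)).dec b y' ⟨hy'.1, e2⟩ hy'.2
    have ea : ((a + 2 : ℕ) : ℤ) - 1 = a + 1 := by push_cast; ring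
    have eb : ((b + 2 : ℕ) : ℤ) - 1 = b + 1 := by push_cast; ring
    refine ⟨y00, ⟨g00, e00⟩, y10, ⟨?_, e10⟩, y01, ⟨?_, e01⟩, y11, ⟨?_, e11⟩, ?_⟩
    · rw [ea]; exact g10
    · rw [eb]; exact g01
    · rw [ea, eb]; exact g11
    · rw [e, f0, f1, map_add]; abel

end HLS

open HLS in
/-- let `d` be a differential on a polarized bigraded Hodge–Lefschetz
structure `(H, N₁, N₂, ψ)`, with Laplacian `Δ = d d* + d* d`. Then `Δ` commutes with both
monodromy operators: `Δ N₁ = N₁ Δ` and `Δ N₂ = N₂ Δ`. -/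
theorem statement15
    {H : Type} [AddCommGroup H] [Module ℝ H]
    (Hgr : ℤ → ℤ → Submodule ℝ H) (N₁ N₂ : H →ₗ[ℝ] H)
    (hHL : IsHL Hgr N₁ N₂)
    (ψ : H →ₗ[ℝ] H →ₗ[ℝ] ℝ) (hψ : IsPolarization Hgr N₁ N₂ ψ)
    (w : H →ₗ[ℝ] H) (hw : IsW Hgr N₁ N₂ w)
    (winv : H →ₗ[ℝ] H) (hwinv : winv ∘ₗ w = LinearMap.id ∧ w ∘ₗ winv = LinearMap.id)
    (dd : H →ₗ[ℝ] H) (hd : IsDifferential Hgr N₁ N₂ ψ dd) :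
    lap w winv dd ∘ₗ N₁ = N₁ ∘ₗ lap w winv dd ∧
    lap w winv dd ∘ₗ N₂ = N₂ ∘ₗ lap w winv dd := by
  have h := core_of hHL ψ w hw dd hd
  have h1 : ∀ x, winv (w x) = x := fun x => LinearMap.congr_fun hwinv.1 x
  exact ⟨h.main winv h1, h.swap.main winv h1⟩
end
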